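/- arXiv:2312.14721 — 2 statements merged into one kernel-verified Lean document; each statement's English description precedes it below -/
import Mathlib

section
/- Let G be a finite simple graph with vertex set V, |V| = n ≥ 1, and edge set E, let H be the auxiliary graph, and let S ⊆ V. Then S is an independent set in G if and only if there exists a partition of the vertex set of H into n districts (nonempty parts each inducing a connected subgraph of H) in which, for every v ∈ S, the singleton {b^v} is a district won by blue. -/
/-!
If `S` is independent, every edge `e` has an endpoint `f e` outside `S`. Assigning `r^e_i` to
`b^(f e)` and each `b^v` to itself splits `H` into `n` stars, one centred at each `b^v`, and the
star at `b^v` is a singleton when `v ∈ S`.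

Conversely, suppose `a, b ∈ S` are joined by an edge `e`. The only neighbours of `r^e_i` are `b^a`
and `b^b`, which form districts of their own, so by connectedness the district of `r^e_i` is
`{r^e_i}`. This gives `2n` distinct districts, more than the `n` available.
-/

/-- A partition of the vertex set of `G` into `k` districts: `k` nonempty,
pairwise disjoint parts covering all vertices, each inducing a connected subgraph. -/
def IsKPartition {α : Type*} (G : SimpleGraph α) (k : ℕ) (P : Set (Set α)) : Prop :=
  P.ncard = k ∧
  (∀ D ∈ P, D.Nonempty) ∧
  (∀ D ∈ P, (G.induce D).Connected) ∧
  P.PairwiseDisjoint id ∧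
  ⋃₀ P = Set.univ

/-- District `D` is won by the candidate `blue`: for every other candidate `j`, the
number of vertices of `D` of color `blue` strictly exceeds that of color `j`. -/
def WonBy {α C : Type*} (color : α → C) (blue : C) (D : Set α) : Prop :=
  ∀ j : C, j ≠ blue → {x ∈ D | color x = j}.ncard < {x ∈ D | color x = blue}.ncard

/-- Vertices of the auxiliary graph `H`: a blue vertex `b^v` for each vertex `v` of `G`,
and `2n` red vertices `r^e_i` for each edge `e` of `G`. -/
inductive AuxV (V E : Type*) (n : ℕ) where
  | blue : V → AuxV V E n
  | red : E → Fin (2 * n) → AuxV V E n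

/-- The auxiliary graph `H`: each red vertex `r^e_i` is adjacent exactly to the blue
vertices `b^u`, `b^v` where `e = {u, v}`. -/
def auxGraph {V : Type*} (G : SimpleGraph V) (n : ℕ) :
    SimpleGraph (AuxV V ↥G.edgeSet n) :=
  SimpleGraph.fromRel (fun x y =>
    ∃ (v : V) (e : ↥G.edgeSet) (i : Fin (2 * n)),
      v ∈ (e : Sym2 V) ∧ x = AuxV.blue v ∧ y = AuxV.red e i)

/-- The coloring of `H`: vertices `b^v` are blue (`true`), vertices `r^e_i` are red
(`false`). -/
def auxIsBlue {V E : Type*} {n : ℕ} : AuxV V E n → Bool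
  | AuxV.blue _ => true
  | AuxV.red _ _ => false

lemma auxGraph_adj_blue_red {V : Type*} {G : SimpleGraph V} {n : ℕ} {v : V} {e : ↥G.edgeSet}
    (i : Fin (2 * n)) (h : v ∈ (e : Sym2 V)) :
    (auxGraph G n).Adj (AuxV.blue v) (AuxV.red e i) := by
  rw [auxGraph, SimpleGraph.fromRel_adj]
  exact ⟨by simp, Or.inl ⟨v, e, i, h, rfl, rfl⟩⟩

lemma exists_blue_of_auxGraph_red_adj {V : Type*} {G : SimpleGraph V} {n : ℕ} {e : ↥G.edgeSet}
    {i : Fin (2 * n)} {y : AuxV V ↥G.edgeSet n} (h : (auxGraph G n).Adj (AuxV.red e i) y) :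
    ∃ v ∈ (e : Sym2 V), y = AuxV.blue v := by
  rw [auxGraph, SimpleGraph.fromRel_adj] at h
  rcases h with ⟨-, ⟨v, e', j, hv, h1, h2⟩ | ⟨v, e', j, hv, h1, h2⟩⟩
  · cases h1
  · cases h2
    exact ⟨v, hv, h1⟩

lemma exists_adj_of_induce_connected {α : Type*} {H : SimpleGraph α} {D : Set α}
    (hD : (H.induce D).Connected) {x y : α} (hx : x ∈ D) (hy : y ∈ D) (hxy : x ≠ y) :
    ∃ z ∈ D, H.Adj x z := by
  obtain ⟨w⟩ := hD.preconnected ⟨x, hx⟩ ⟨y, hy⟩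
  cases w with
  | nil => exact absurd rfl hxy
  | cons h _ => exact ⟨_, Subtype.property _, h⟩

/-- The centre of the star containing a vertex of `H`, when the red vertices of the edge `e` are
assigned to the vertex `f e`. -/
def auxOwner {V E : Type*} {n : ℕ} (f : E → V) : AuxV V E n → V
  | AuxV.blue v => v
  | AuxV.red e _ => f e

/-- The stars given by a choice of an endpoint of every edge form a partition into districts. -/
lemma isKPartition_range_auxOwner {V : Type*} [Fintype V] (G : SimpleGraph V) (n : ℕ)
    (hn : Fintype.card V = n) (f : ↥G.edgeSet → V) (hf : ∀ e : ↥G.edgeSet, f e ∈ (e : Sym2 V)) :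
    IsKPartition (auxGraph G n) n
      (Set.range fun v : V => (auxOwner f ⁻¹' {v} : Set (AuxV V ↥G.edgeSet n))) := by
  have hmem : ∀ v, (AuxV.blue v : AuxV V ↥G.edgeSet n) ∈ (auxOwner f ⁻¹' {v}) := fun _ => rfl
  refine ⟨?_, ?_, ?_, ?_, ?_⟩
  · rw [← Set.image_univ, Set.ncard_image_of_injective, Set.ncard_univ, Nat.card_eq_fintype_card,
      hn]
    intro v w (h : auxOwner f ⁻¹' {v} = auxOwner f ⁻¹' {w})
    have := hmem v
    rw [h] at this
    exact this
  · rintro _ ⟨v, rfl⟩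
    exact ⟨_, hmem v⟩
  · rintro _ ⟨v, rfl⟩
    rw [SimpleGraph.connected_iff_exists_forall_reachable]
    refine ⟨⟨AuxV.blue v, hmem v⟩, ?_⟩
    rintro ⟨x, hx⟩
    cases x with
    | blue w =>
      obtain rfl : w = v := hx
      exact SimpleGraph.Reachable.refl _
    | red e i =>
      obtain rfl : f e = v := hx
      exact SimpleGraph.Adj.reachable (auxGraph_adj_blue_red i (hf e))
  · rintro _ ⟨v, rfl⟩ _ ⟨w, rfl⟩ hne
    refine Set.disjoint_left.2 fun x hx hx' => hne ?_
    have h1 : auxOwner f x = v := hx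
    have h2 : auxOwner f x = w := hx'
    rw [← h1, ← h2]
  · exact Set.eq_univ_of_forall fun x => ⟨_, ⟨auxOwner f x, rfl⟩, rfl⟩

/-- key equivalence inside Lemma 3.1: `S` is an independent set of `G`
iff `H` admits a partition into `n` districts in which, for every `v ∈ S`, the singleton
`{b^v}` is a district won by blue. -/
theorem stmt3 {V : Type*} [Fintype V] (G : SimpleGraph V)
    (n : ℕ) (hn : Fintype.card V = n) (hn1 : 1 ≤ n)
    (S : Set V) :
    S.Pairwise (fun a b => ¬ G.Adj a b) ↔
    (∃ P : Set (Set (AuxV V ↥G.edgeSet n)),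
      IsKPartition (auxGraph G n) n P ∧
      ∀ v ∈ S, ({AuxV.blue v} : Set (AuxV V ↥G.edgeSet n)) ∈ P ∧
        WonBy auxIsBlue true ({AuxV.blue v} : Set (AuxV V ↥G.edgeSet n))) := by
  classical
  constructor
  · intro hS
    have hex : ∀ e : ↥G.edgeSet, ∃ v ∈ (e : Sym2 V), v ∉ S := by
      rintro ⟨e, he⟩
      induction e with
      | _ a b =>
        have hab : G.Adj a b := he
        by_cases ha : a ∈ S
        · exact ⟨b, by simp, fun hb => hS ha hb hab.ne hab⟩
        · exact ⟨a, by simp, ha⟩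
    choose f hf hfS using hex
    refine ⟨_, isKPartition_range_auxOwner G n hn f hf, fun v hv => ⟨⟨v, ?_⟩, ?_⟩⟩
    · ext x
      cases x with
      | blue w => simp [auxOwner]
      | red e i =>
        have : f e ≠ v := fun h => hfS e (h ▸ hv)
        simp [auxOwner, this]
    · intro j hj
      have h1 : {x ∈ ({AuxV.blue v} : Set (AuxV V ↥G.edgeSet n)) | auxIsBlue x = j} = ∅ := by
        ext x
        simp only [Set.mem_ofPred_eq, Set.mem_singleton_iff, Set.mem_empty_iff_false, iff_false]
        rintro ⟨rfl, h⟩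
        exact hj h.symm
      have h2 : {x ∈ ({AuxV.blue v} : Set (AuxV V ↥G.edgeSet n)) | auxIsBlue x = true}
          = {AuxV.blue v} := by
        ext x
        simp only [Set.mem_ofPred_eq, Set.mem_singleton_iff, and_iff_left_iff_imp]
        rintro rfl
        rfl
      rw [h1, h2]
      simp
  · rintro ⟨P, ⟨hcard, -, hconn, hdisj, hcov⟩, hP⟩ a ha b hb - hab
    let e : ↥G.edgeSet := ⟨s(a, b), hab⟩
    have hsing : ∀ i : Fin (2 * n), ({AuxV.red e i} : Set (AuxV V ↥G.edgeSet n)) ∈ P := by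
      intro i
      obtain ⟨D, hD, hi⟩ : AuxV.red e i ∈ ⋃₀ P := hcov ▸ Set.mem_univ _
      suffices h : D = {AuxV.red e i} from h ▸ hD
      refine Set.eq_singleton_iff_unique_mem.2 ⟨hi, fun y hy => ?_⟩
      by_contra hne
      obtain ⟨z, hz, hadj⟩ := exists_adj_of_induce_connected (hconn D hD) hi hy (Ne.symm hne)
      obtain ⟨v, hv, rfl⟩ := exists_blue_of_auxGraph_red_adj hadj
      have hvS : v ∈ S := by
        rcases Sym2.mem_iff.1 hv with rfl | rfl <;> assumption
      have hDv : D = {AuxV.blue v} :=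
        hdisj.elim_set hD (hP v hvS).1 (AuxV.blue v) hz rfl
      rw [hDv] at hi
      cases hi
    have hfin : P.Finite := Set.finite_of_ncard_pos (by omega)
    have hle : (Set.range fun i : Fin (2 * n) =>
        ({AuxV.red e i} : Set (AuxV V ↥G.edgeSet n))).ncard ≤ P.ncard :=
      Set.ncard_le_ncard (by rintro _ ⟨i, rfl⟩; exact hsing i) hfin
    rw [← Set.image_univ, Set.ncard_image_of_injective, Set.ncard_univ, Nat.card_eq_fintype_card,
      Fintype.card_fin, hcard] at hle
    · omega
    · intro i j h
      simpa using h
end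

section
/- Let G be a finite connected simple graph with vertex set V, |V| = n ≥ 2, and edge set E, |E| = m, let l ≥ 2 be an integer, and let H be the auxiliary graph. Consider any partition of the vertex set of H into n districts (nonempty parts each inducing a connected subgraph of H), and suppose W is a district won by blue. Then the set V^W := {v ∈ V : w^v ∈ W} is a connected vertex cover of G of cardinality at most l. -/
/-- Vertices of the auxiliary graph `H` for the connected-vertex-cover reduction:
a white vertex `w^v` and `n·m·(m+1)` red vertices `r^v_i` for each vertex `v` of `G`;
a blue vertex `b^e`, `n·l·(m+1)` blue vertices `b'^e_i`, and `m` vertices `c^e_{i,j}`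
of color `C^e` for each `b'^e_i`, for each edge `e` of `G`. -/
inductive CVert (V E : Type*) (n m l : ℕ) where
  | w : V → CVert V E n m l
  | r : V → Fin (n * m * (m + 1)) → CVert V E n m l
  | b : E → CVert V E n m l
  | b' : E → Fin (n * l * (m + 1)) → CVert V E n m l
  | c : E → Fin (n * l * (m + 1)) → Fin m → CVert V E n m l

/-- The colors used in the auxiliary graph `H`: blue, red, white, and one extra
color `C^e` for each edge `e` of `G`. -/
inductive CColor (E : Type*) where
  | blue : CColor E
  | red : CColor E
  | white : CColor E
  | ce : E → CColor E

/-- The coloring of the auxiliary graph `H`. -/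
def cColor {V E : Type*} {n m l : ℕ} : CVert V E n m l → CColor E
  | CVert.w _ => CColor.white
  | CVert.r _ _ => CColor.red
  | CVert.b _ => CColor.blue
  | CVert.b' _ _ => CColor.blue
  | CVert.c e _ _ => CColor.ce e

/-- The auxiliary graph `H`: each `r^v_i` is adjacent exactly to `w^v`; each `b^e` with
`e = {u,v}` is adjacent to `w^u` and `w^v`; each `b'^e_i` is adjacent exactly to `b^e`
(and to its own `c`-vertices); each `c^e_{i,j}` is adjacent exactly to `b'^e_i`. -/
def cGraph {V : Type*} (G : SimpleGraph V) (n m l : ℕ) :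
    SimpleGraph (CVert V ↥G.edgeSet n m l) :=
  SimpleGraph.fromRel (fun x y =>
    (∃ (v : V) (i : Fin (n * m * (m + 1))), x = CVert.w v ∧ y = CVert.r v i) ∨
    (∃ (v : V) (e : ↥G.edgeSet), v ∈ (e : Sym2 V) ∧ x = CVert.w v ∧ y = CVert.b e) ∨
    (∃ (e : ↥G.edgeSet) (i : Fin (n * l * (m + 1))), x = CVert.b e ∧ y = CVert.b' e i) ∨
    (∃ (e : ↥G.edgeSet) (i : Fin (n * l * (m + 1))) (j : Fin m),
      x = CVert.b' e i ∧ y = CVert.c e i j))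

/-! ### Crossing edges and separated vertices -/

/-- A connected district meeting both `S` and its complement has an edge that leaves `S`. -/
lemma exists_crossing {α : Type*} {H : SimpleGraph α} {D : Set α} (hD : (H.induce D).Connected)
    (S : Set α) {x y : α} (hx : x ∈ D) (hxS : x ∈ S) (hy : y ∈ D) (hyS : y ∉ S) :
    ∃ a b, a ∈ D ∧ b ∈ D ∧ a ∈ S ∧ b ∉ S ∧ H.Adj a b := by
  obtain ⟨p⟩ := hD.preconnected ⟨x, hx⟩ ⟨y, hy⟩
  obtain ⟨d, -, h1, h2⟩ := p.exists_boundary_dart {z | (z : α) ∈ S} hxS hyS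
  exact ⟨d.fst, d.snd, d.fst.2, d.snd.2, h1, h2, d.adj⟩

/-- If the vertices `f i` lie outside the district `W`, and each `f i` lies in a set `S i` that
contains no other `f j` and can only be left through `W`, then the `f i` are in distinct districts
other than `W`. -/
lemma separated_card {α : Type*} {H : SimpleGraph α} {k : ℕ} (hk : k ≠ 0) {P : Set (Set α)}
    (hP : IsKPartition H k P) {W : Set α} (hW : W ∈ P) {ι : Type*} [Finite ι]
    (f : ι → α) (S : ι → Set α) (hfW : ∀ i, f i ∉ W) (hS : ∀ i, f i ∈ S i)
    (hne : ∀ i j, i ≠ j → f j ∉ S i)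
    (hout : ∀ i a b, a ∈ S i → b ∉ S i → H.Adj a b → a ∉ W → b ∈ W) :
    Nat.card ι + 1 ≤ k := by
  obtain ⟨hcard, -, hconn, hdisj, hcov⟩ := hP
  have hex : ∀ i, ∃ D ∈ P, f i ∈ D := fun i => by
    have : f i ∈ ⋃₀ P := by rw [hcov]; trivial
    exact this
  choose D hDP hfD using hex
  have hDW : ∀ i, D i ≠ W := fun i h => hfW i (h ▸ hfD i)
  have hinj : Function.Injective D := by
    intro i j hij
    by_contra hne'
    obtain ⟨a, b, ha, hb, haS, hbS, hadj⟩ := exists_crossing (hconn _ (hDP i)) (S i) (hfD i) (hS i)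
      (hij ▸ hfD j) (hne i j hne')
    have hd : Disjoint (D i) W := hdisj (hDP i) hW (hDW i)
    exact Set.disjoint_left.1 hd hb (hout i a b haS hbS hadj (Set.disjoint_left.1 hd ha))
  have hfin : P.Finite := Set.finite_of_ncard_ne_zero (hcard ▸ hk)
  have h1 : Set.range D ⊆ P \ {W} := by
    rintro _ ⟨i, rfl⟩
    exact ⟨hDP i, hDW i⟩
  have h2 := Set.ncard_le_ncard h1 hfin.sdiff
  rw [← Set.image_univ, Set.ncard_image_of_injective _ hinj, Set.ncard_univ] at h2
  have h3 := Set.ncard_sdiff_singleton_add_one hW hfin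
  omega

instance CVert.instFinite {V E : Type*} [Finite V] [Finite E] (n m l : ℕ) :
    Finite (CVert V E n m l) := by
  let f : V ⊕ (V × Fin (n * m * (m + 1))) ⊕ E ⊕ (E × Fin (n * l * (m + 1))) ⊕
      (E × Fin (n * l * (m + 1)) × Fin m) → CVert V E n m l
    | .inl v => .w v
    | .inr (.inl (v, i)) => .r v i
    | .inr (.inr (.inl e)) => .b e
    | .inr (.inr (.inr (.inl (e, i)))) => .b' e i
    | .inr (.inr (.inr (.inr (e, i, j)))) => .c e i j
  refine Finite.of_surjective f ?_
  rintro (v | ⟨v, i⟩ | e | ⟨e, i⟩ | ⟨e, i, j⟩)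
  · exact ⟨.inl v, rfl⟩
  · exact ⟨.inr (.inl (v, i)), rfl⟩
  · exact ⟨.inr (.inr (.inl e)), rfl⟩
  · exact ⟨.inr (.inr (.inr (.inl (e, i)))), rfl⟩
  · exact ⟨.inr (.inr (.inr (.inr (e, i, j)))), rfl⟩

/-! ### The pieces of the auxiliary graph and the edges leaving them -/

section Gadget

variable {V : Type*} {G : SimpleGraph V} {n m l : ℕ}

/-- The star consisting of `b'^e_i` and its neighbors `c^e_{i,j}`. -/
def starB' (n m l : ℕ) (e : ↥G.edgeSet) (i : Fin (n * l * (m + 1))) :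
    Set (CVert V ↥G.edgeSet n m l) :=
  {x | x = .b' e i ∨ ∃ j, x = .c e i j}

/-- The star consisting of `w^v` and its red neighbors `r^v_i`. -/
def starW (G : SimpleGraph V) (n m l : ℕ) (v : V) : Set (CVert V ↥G.edgeSet n m l) :=
  {x | x = .w v ∨ ∃ i, x = .r v i}

/-- The gadget of the edge `e`: all vertices `b^e`, `b'^e_i` and `c^e_{i,j}`. -/
def gadget (n m l : ℕ) (e : ↥G.edgeSet) : Set (CVert V ↥G.edgeSet n m l) :=
  {x | x = .b e ∨ ∃ i, x ∈ starB' n m l e i}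

lemma starB'_out {e : ↥G.edgeSet} {i : Fin (n * l * (m + 1))} {a b : CVert V ↥G.edgeSet n m l}
    (ha : a ∈ starB' n m l e i) (hb : b ∉ starB' n m l e i) (h : (cGraph G n m l).Adj a b) :
    b = .b e := by
  rcases ha with rfl | ⟨j, rfl⟩ <;> cases b <;> simp_all [-Subtype.exists, cGraph, starB']

lemma starW_out {v : V} {a b : CVert V ↥G.edgeSet n m l}
    (ha : a ∈ starW G n m l v) (hb : b ∉ starW G n m l v) (h : (cGraph G n m l).Adj a b) :
    ∃ e, b = .b e := by
  rcases ha with rfl | ⟨j, rfl⟩ <;> cases b <;> simp_all [-Subtype.exists, cGraph, starW]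

lemma gadget_out {e : ↥G.edgeSet} {a b : CVert V ↥G.edgeSet n m l}
    (ha : a ∈ gadget n m l e) (hb : b ∉ gadget n m l e) (h : (cGraph G n m l).Adj a b) :
    ∃ v ∈ (e : Sym2 V), b = .w v := by
  rcases ha with rfl | ⟨i, rfl | ⟨j, rfl⟩⟩ <;> cases b <;>
    simp_all [-Subtype.exists, cGraph, gadget, starB']

lemma r_out {v : V} {i : Fin (n * m * (m + 1))} {b : CVert V ↥G.edgeSet n m l}
    (h : (cGraph G n m l).Adj (.r v i) b) : b = .w v := by
  cases b <;> simp_all [-Subtype.exists, cGraph]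

lemma c_out {e : ↥G.edgeSet} {i : Fin (n * l * (m + 1))} {j : Fin m}
    {b : CVert V ↥G.edgeSet n m l}
    (h : (cGraph G n m l).Adj (.c e i j) b) : b = .b' e i := by
  cases b <;> simp_all [-Subtype.exists, cGraph]

variable {W : Set (CVert V ↥G.edgeSet n m l)} {P : Set (Set (CVert V ↥G.edgeSet n m l))}

/-! ### Color counts in a district -/

lemma blue_le [Finite V] (hb' : ∀ e i, CVert.b' e i ∈ W → CVert.b e ∈ W) :
    {x ∈ W | cColor x = CColor.blue}.ncard ≤
      {e | CVert.b e ∈ W}.ncard * (n * l * (m + 1) + 1) := by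
  let f : ↥G.edgeSet × Option (Fin (n * l * (m + 1))) → CVert V ↥G.edgeSet n m l :=
    fun p => p.2.elim (.b p.1) (fun i => .b' p.1 i)
  have hsub : {x ∈ W | cColor x = CColor.blue} ⊆
      f '' ({e | CVert.b e ∈ W} ×ˢ Set.univ) := by
    rintro (v | ⟨v, i⟩ | e | ⟨e, i⟩ | ⟨e, i, j⟩) ⟨hx, hc⟩ <;> simp [cColor] at hc
    · exact ⟨(e, none), ⟨hx, trivial⟩, rfl⟩
    · exact ⟨(e, some i), ⟨hb' _ _ hx, trivial⟩, rfl⟩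
  refine (Set.ncard_le_ncard hsub (Set.toFinite _)).trans
    ((Set.ncard_image_le (Set.toFinite _)).trans ?_)
  rw [Set.ncard_prod, Set.ncard_univ]
  simp

/-- Every index `i` whose star is not contained in `W` costs a district of its own, and at most `m`
vertices of color `C^e`. -/
lemma le_ce [Finite V] (hn : n ≠ 0) (hP : IsKPartition (cGraph G n m l) n P) (hW : W ∈ P)
    {e : ↥G.edgeSet} (he : CVert.b e ∈ W) :
    (n * l * (m + 1) - (n - 1)) * m ≤ {x ∈ W | cColor x = CColor.ce e}.ncard := by
  let A : Set (Fin (n * l * (m + 1))) := {i | ∃ x ∈ starB' n m l e i, x ∉ W}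
  have hA : A.ncard + 1 ≤ n := by
    choose f hfS hfW using fun i : A => i.2
    refine separated_card hn hP hW f (fun i => starB' n m l e i) hfW hfS ?_ ?_
    · intro i j hij hj
      apply hij
      ext1
      have := hfS j
      rcases hj with h | ⟨_, h⟩ <;> rcases this with h' | ⟨_, h'⟩ <;> rw [h] at h' <;>
        simp_all
    · intro i a b ha hb hab _
      rw [starB'_out ha hb hab]
      exact he
  let f : Fin (n * l * (m + 1)) × Fin m → CVert V ↥G.edgeSet n m l := fun p => .c e p.1 p.2
  have hf : Function.Injective f := by
    rintro ⟨a, b⟩ ⟨c, d⟩ h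
    simpa [f] using h
  have hsub : f '' (Aᶜ ×ˢ Set.univ) ⊆ {x ∈ W | cColor x = CColor.ce e} := by
    rintro _ ⟨⟨i, j⟩, ⟨hi, -⟩, rfl⟩
    refine ⟨?_, rfl⟩
    by_contra hc
    exact hi ⟨_, Or.inr ⟨j, rfl⟩, hc⟩
  have h := Set.ncard_le_ncard hsub (Set.toFinite _)
  rw [Set.ncard_image_of_injective _ hf, Set.ncard_prod, Set.ncard_univ, Nat.card_fin,
    Set.ncard_compl, Nat.card_fin] at h
  refine le_trans (Nat.mul_le_mul_right _ ?_) h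
  omega

/-- The red vertices outside `W` whose white neighbor is in `W` are singleton districts. -/
lemma le_red [Finite V] (hn : n ≠ 0) (hP : IsKPartition (cGraph G n m l) n P) (hW : W ∈ P) :
    {x : V | CVert.w x ∈ W}.ncard * (n * m * (m + 1)) ≤
      {x ∈ W | cColor x = CColor.red}.ncard + (n - 1) := by
  let f : V × Fin (n * m * (m + 1)) → CVert V ↥G.edgeSet n m l := fun p => .r p.1 p.2
  have hf : Function.Injective f := by
    rintro ⟨a, b⟩ ⟨c, d⟩ h
    simpa [f] using h
  let T : Set (V × Fin (n * m * (m + 1))) := {x : V | CVert.w x ∈ W} ×ˢ Set.univ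
  have hT : T.ncard = {x : V | CVert.w x ∈ W}.ncard * (n * m * (m + 1)) := by
    rw [Set.ncard_prod, Set.ncard_univ, Nat.card_fin]
  have hmiss : (T \ f ⁻¹' W).ncard + 1 ≤ n := by
    refine separated_card hn hP hW (fun p : ↥(T \ f ⁻¹' W) => f p) (fun p => {f p})
      (fun p => p.2.2) (fun p => rfl) ?_ ?_
    · intro i j hij h
      exact hij (Subtype.ext (hf h.symm))
    · rintro i a b rfl _ hab _
      rw [r_out hab]
      exact i.2.1.1
  have hsub : f '' (T ∩ f ⁻¹' W) ⊆ {x ∈ W | cColor x = CColor.red} := by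
    rintro _ ⟨p, ⟨-, hp⟩, rfl⟩
    exact ⟨hp, rfl⟩
  have h := Set.ncard_le_ncard hsub (Set.toFinite _)
  rw [Set.ncard_image_of_injective _ hf] at h
  have := Set.ncard_inter_add_ncard_sdiff_eq_ncard T (f ⁻¹' W) (Set.toFinite _)
  omega

/-! ### Structure of a district won by blue -/

lemma exists_b_mem [Finite V] (hn : n ≠ 0) (hnm : n ≤ m + 1)
    (hP : IsKPartition (cGraph G n m l) n P) (hW : W ∈ P)
    (hwin : WonBy cColor CColor.blue W) : ∃ e, CVert.b e ∈ W := by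
  by_contra! hno
  have hconn := hP.2.2.1 W hW
  have hpos := (Nat.zero_le _).trans_lt (hwin CColor.white (by simp))
  obtain ⟨x, hx, hxc⟩ := (Set.ncard_pos (Set.toFinite _)).1 hpos
  obtain ⟨e, i, rfl⟩ : ∃ e i, x = CVert.b' e i := by
    cases x <;> simp_all [cColor]
  have hWS : W ⊆ starB' n m l e i := by
    intro y hy
    by_contra hyS
    obtain ⟨a, b, -, hb, haS, hbS, hab⟩ := exists_crossing hconn (starB' n m l e i) hx
      (Or.inl rfl) hy hyS
    rw [starB'_out haS hbS hab] at hb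
    exact hno _ hb
  have hblue : {x ∈ W | cColor x = CColor.blue}.ncard ≤ 1 := by
    rw [← Set.ncard_singleton (CVert.b' e i : CVert V ↥G.edgeSet n m l)]
    refine Set.ncard_le_ncard ?_ (Set.toFinite _)
    rintro y ⟨hy, hyc⟩
    rcases hWS hy with rfl | ⟨j, rfl⟩
    · rfl
    · simp [cColor] at hyc
  have hc0 : {x ∈ W | cColor x = CColor.ce e}.ncard = 0 := by
    have := hwin (CColor.ce e) (by simp)
    omega
  rw [Set.ncard_eq_zero (Set.toFinite _)] at hc0
  have hcW : ∀ j, CVert.c e i j ∉ W := fun j hj => by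
    have : CVert.c e i j ∈ {x ∈ W | cColor x = CColor.ce e} := ⟨hj, rfl⟩
    rw [hc0] at this
    exact this
  -- The separating set of `b^e` is the complement of the star; it can only be left through the
  -- center `b'^e_i` of the star.
  have h := separated_card hn hP hW
    (fun o : Option (Fin m) => o.elim (CVert.b e) (fun j => CVert.c e i j))
    (fun o => o.elim (starB' n m l e i)ᶜ (fun j => {CVert.c e i j})) ?_ ?_ ?_ ?_
  · simp at h
    omega
  · rintro (_ | j)
    · exact hno e
    · exact hcW j
  · rintro (_ | j) <;> simp [starB']
  · rintro (_ | j) (_ | k) hjk <;> simp_all [starB']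
    exact fun h => hjk h.symm
  · rintro (_ | j) a b ha hb hab _
    · simp only [Option.elim, Set.mem_compl_iff, not_not] at ha hb
      rcases hb with rfl | ⟨j, rfl⟩
      · exact hx
      · exact absurd (Or.inl (c_out hab.symm)) ha
    · simp only [Option.elim, Set.mem_singleton_iff] at ha
      subst ha
      rw [c_out hab]
      exact hx

lemma b_mem_of_b'_mem (hconn : ((cGraph G n m l).induce W).Connected)
    (hex : ∃ e, CVert.b e ∈ W) (e : ↥G.edgeSet) (i : Fin (n * l * (m + 1)))
    (hi : CVert.b' e i ∈ W) : CVert.b e ∈ W := by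
  obtain ⟨e₀, he₀⟩ := hex
  obtain ⟨a, b, -, hb, haS, hbS, hab⟩ := exists_crossing hconn (starB' n m l e i) hi
    (Or.inl rfl) he₀ (by simp [starB'])
  rwa [starB'_out haS hbS hab] at hb

lemma all_b_mem [Finite V] (hn : n ≠ 0) (hnm : n ≤ m + 1) (hm : G.edgeSet.ncard = m)
    (hl : 1 ≤ l) (hP : IsKPartition (cGraph G n m l) n P) (hW : W ∈ P)
    (hwin : WonBy cColor CColor.blue W) (e : ↥G.edgeSet) : CVert.b e ∈ W := by
  have hex := exists_b_mem hn hnm hP hW hwin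
  have hblue := blue_le (b_mem_of_b'_mem (hP.2.2.1 W hW) hex)
  obtain ⟨e₀, he₀⟩ := hex
  by_contra he
  have hlt : {e | CVert.b e ∈ W}.ncard < m := by
    refine lt_of_lt_of_eq (Set.ncard_lt_card fun h => ?_) hm
    have : e ∈ {e | CVert.b e ∈ W} := by rw [h]; trivial
    exact he this
  have hce := le_ce hn hP hW he₀
  have hw := hwin (CColor.ce e₀) (by simp)
  generalize {e | CVert.b e ∈ W}.ncard = F at *
  have hN : n * (m + 1) ≤ n * l * (m + 1) := by
    apply Nat.mul_le_mul_right
    nlinarith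
  generalize n * l * (m + 1) = N at *
  have h1 : (N - (n - 1)) * m < F * (N + 1) := by omega
  have h2 : F * (N + 1) ≤ (m - 1) * (N + 1) := Nat.mul_le_mul_right _ (by omega)
  obtain ⟨k, rfl⟩ : ∃ k, m = k + 1 := ⟨m - 1, by omega⟩
  obtain ⟨p, rfl⟩ : ∃ p, n = p + 1 := ⟨n - 1, by omega⟩
  obtain ⟨q, rfl⟩ : ∃ q, N = q + p := ⟨N - p, (Nat.sub_add_cancel (by nlinarith)).symm⟩
  simp only [Nat.add_sub_cancel] at h1 h2
  nlinarith

lemma cover [Finite V] (hn : n ≠ 0) (hnm : n ≤ m + 1) (hm : G.edgeSet.ncard = m)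
    (hP : IsKPartition (cGraph G n m l) n P) (hW : W ∈ P)
    (hall : ∀ e, CVert.b e ∈ W) {u v : V} (huv : G.Adj u v) :
    CVert.w u ∈ W ∨ CVert.w v ∈ W := by
  by_contra! hno
  let e : ↥G.edgeSet := ⟨s(u, v), huv⟩
  have hone : ∀ e', e' = e := by
    intro e'
    by_contra hne
    obtain ⟨a, b, -, hb, haS, hbS, hab⟩ := exists_crossing (hP.2.2.1 W hW) (gadget n m l e)
      (hall e) (Or.inl rfl) (hall e') (by simp [gadget, starB', hne])
    obtain ⟨x, hx, rfl⟩ := gadget_out haS hbS hab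
    rcases Sym2.mem_iff.1 hx with rfl | rfl
    · exact hno.1 hb
    · exact hno.2 hb
  have hm1 : m ≤ 1 := by
    rw [← hm, ← Nat.card_coe_set_eq]
    have : Subsingleton ↥G.edgeSet := ⟨fun a b => (hone a).trans (hone b).symm⟩
    exact Finite.card_le_one_iff_subsingleton.2 this
  have h := separated_card hn hP hW (fun c : Bool => CVert.w (cond c u v))
    (fun c => starW G n m l (cond c u v)) ?_ ?_ ?_ ?_
  · simp at h
    omega
  · rintro (_ | _)
    exacts [hno.2, hno.1]
  · intro c
    exact Or.inl rfl
  · have := huv.ne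
    rintro (_ | _) (_ | _) hc <;> simp_all [starW, eq_comm]
  · intro c a b ha hb hab _
    obtain ⟨e', rfl⟩ := starW_out ha hb hab
    exact hall e'

lemma connected_cover (hconn : ((cGraph G n m l).induce W).Connected)
    (hne : {x : V | CVert.w x ∈ W}.Nonempty) :
    (G.induce {x : V | CVert.w x ∈ W}).Connected := by
  have : Nonempty {x : V | CVert.w x ∈ W} := hne.to_subtype
  refine ⟨?_⟩
  rintro ⟨u, hu⟩ ⟨v, hv⟩
  by_contra hreach
  let A : Set V := {x | ∃ hx : CVert.w x ∈ W,
    (G.induce {x : V | CVert.w x ∈ W}).Reachable ⟨u, hu⟩ ⟨x, hx⟩}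
  -- All of `H` hanging at the component `A` of `u`, including the gadgets of edges meeting `A`.
  let S : Set (CVert V ↥G.edgeSet n m l) := {x | (∃ v ∈ A, x ∈ starW G n m l v) ∨
    ∃ e : ↥G.edgeSet, (∃ y ∈ A, y ∈ (e : Sym2 V)) ∧ x ∈ gadget n m l e}
  have huS : CVert.w u ∈ S := Or.inl ⟨u, ⟨hu, .refl _⟩, Or.inl rfl⟩
  have hvS : CVert.w v ∉ S := by
    rintro (⟨x, ⟨hx, hr⟩, h | ⟨i, h⟩⟩ | ⟨e, -, h | ⟨i, h | ⟨j, h⟩⟩⟩) <;> simp at h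
    subst h
    exact hreach hr
  obtain ⟨a, b, ha, hb, haS, hbS, hab⟩ := exists_crossing hconn S hu huS hv hvS
  rcases haS with ⟨x, hxA, hx⟩ | ⟨e, ⟨y, hyA, hye⟩, he⟩
  · have hbx : b ∉ starW G n m l x := fun h => hbS (Or.inl ⟨x, hxA, h⟩)
    obtain ⟨e, rfl⟩ := starW_out hx hbx hab
    refine hbS (Or.inr ⟨e, ⟨x, hxA, ?_⟩, Or.inl rfl⟩)
    rcases hx with rfl | ⟨i, rfl⟩
    · simpa [cGraph] using hab
    · simp [cGraph] at hab
  · have hbe : b ∉ gadget n m l e := fun h => hbS (Or.inr ⟨e, ⟨y, hyA, hye⟩, h⟩)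
    obtain ⟨x, hxe, rfl⟩ := gadget_out he hbe hab
    refine hbS (Or.inl ⟨x, ?_, Or.inl rfl⟩)
    obtain ⟨hyW, hr⟩ := hyA
    by_cases hxy : y = x
    · subst hxy
      exact ⟨hyW, hr⟩
    · have hadj : G.Adj y x := by
        have h := e.2
        rwa [(Sym2.mem_and_mem_iff hxy).1 ⟨hye, hxe⟩] at h
      exact ⟨hb, hr.trans (SimpleGraph.Adj.reachable (by simpa using hadj))⟩

end Gadget

/-- backward direction inside Theorem 3.3: in any partition of `H`
into `n` districts, if `W` is a district won by blue then
`V^W = {v ∈ V : w^v ∈ W}` is a connected vertex cover of `G` of size at most `l`. -/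
theorem stmt7 {V : Type*} [Fintype V] (G : SimpleGraph V) (hG : G.Connected)
    (n m : ℕ) (hn : Fintype.card V = n) (hn2 : 2 ≤ n)
    (hm : G.edgeSet.ncard = m)
    (l : ℕ) (hl : 2 ≤ l)
    (P : Set (Set (CVert V ↥G.edgeSet n m l)))
    (hP : IsKPartition (cGraph G n m l) n P)
    (W : Set (CVert V ↥G.edgeSet n m l)) (hW : W ∈ P)
    (hwin : WonBy cColor CColor.blue W) :
    (∀ ⦃u v : V⦄, G.Adj u v → u ∈ {x : V | CVert.w x ∈ W} ∨ v ∈ {x : V | CVert.w x ∈ W}) ∧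
    (G.induce {x : V | CVert.w x ∈ W}).Connected ∧
    {x : V | CVert.w x ∈ W}.ncard ≤ l := by
  have hnm : n ≤ m + 1 := by
    rw [← hn, ← hm, ← Nat.card_eq_fintype_card, ← Nat.card_coe_set_eq]
    exact hG.card_vert_le_card_edgeSet_add_one
  have hn0 : n ≠ 0 := by omega
  have hall := all_b_mem hn0 hnm hm (by omega) hP hW hwin
  have hcov : ∀ ⦃u v : V⦄, G.Adj u v → CVert.w u ∈ W ∨ CVert.w v ∈ W :=
    fun u v huv => cover hn0 hnm hm hP hW hall huv
  have hconn := hP.2.2.1 W hW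
  obtain ⟨⟨⟨u₀, v₀⟩, he⟩⟩ : Nonempty ↥G.edgeSet := by
    have : 0 < Nat.card ↥G.edgeSet := by rw [Nat.card_coe_set_eq]; omega
    exact (Nat.card_pos_iff.1 this).1
  refine ⟨hcov, connected_cover hconn ?_, ?_⟩
  · rcases hcov he with h | h
    exacts [⟨u₀, h⟩, ⟨v₀, h⟩]
  have hblue := blue_le (fun e i _ => hall e : ∀ e i, CVert.b' e i ∈ W → CVert.b e ∈ W)
  have hF : {e | CVert.b e ∈ W}.ncard ≤ m :=
    (Set.ncard_le_card _).trans_eq hm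
  have hred := le_red hn0 hP hW
  have hw := hwin CColor.red (by simp)
  by_contra! hs
  have h1 := Nat.mul_le_mul_right (n * m * (m + 1)) (Nat.add_one_le_iff.2 hs)
  have h2 := Nat.mul_le_mul_right (n * l * (m + 1) + 1) hF
  have h3 : (l + 1) * (n * m * (m + 1)) < m * (n * l * (m + 1) + 1) + (n - 1) := by omega
  obtain ⟨p, rfl⟩ : ∃ p, n = p + 1 := ⟨n - 1, by omega⟩
  obtain ⟨k, rfl⟩ : ∃ k, m = k + 1 := ⟨m - 1, by omega⟩
  simp only [Nat.add_sub_cancel] at h3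
  have h4 : (p + 1) * (k + 1) * (k + 1 + 1) < k + 1 + p := by nlinarith
  nlinarith [Nat.zero_le (p * k), Nat.zero_le (p * k * k), Nat.zero_le (k * k)]
end
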